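/- (2-Replacement lemma) Let G be a finite abelian group and p a prime dividing |G|. Write the p-Sylow subgroup of G as C_{p^{a_1}} ⊕ ⋯ ⊕ C_{p^{a_k}} with a_1 ≥ a_2 ≥ ⋯ ≥ a_k ≥ 1 (setting a_j = 0 for j > k), and suppose a_2 > a_3. Let a be an integer with a_3 + 1 ≤ a ≤ a_2, and suppose p is 2-small with respect to exp(G)/p^{a_1}. If S is a dense zero-sum free sequence over G, then S contains at least 2p − 2 elements of order p^a. -/

import Mathlib

/-- The cross number `k(S)` of a sequence (finite multiset) `S` over an additive group:
the sum, with multiplicity, of the reciprocals of the orders of its elements. -/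
noncomputable def crossNum {G : Type*} [AddCommGroup G] (S : Multiset G) : ℝ :=
  (S.map fun g => ((addOrderOf g : ℝ))⁻¹).sum

/-- `S` is zero-sum free: no nonempty sub-multiset of `S` has sum `0`. -/
def IsZeroSumFree {G : Type*} [AddCommGroup G] (S : Multiset G) : Prop :=
  ∀ T : Multiset G, T ≤ S → T ≠ 0 → T.sum ≠ 0

/-- The little cross number `k(G)`: the maximal cross number of a zero-sum free
sequence over `G`. -/
noncomputable def littleK (G : Type*) [AddCommGroup G] : ℝ :=
  sSup {x : ℝ | ∃ S : Multiset G, IsZeroSumFree S ∧ crossNum S = x}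

/-- A prime `p` is 2-small with respect to `n` (written `p ≺² n`) if `p ∤ n` and
`(2p+2)/(2p+1) > ∑_{d ∣ n} 1/d`. -/
def TwoSmall (p n : ℕ) : Prop :=
  ¬ p ∣ n ∧ ((2 * p + 2 : ℚ) / (2 * p + 1)) > ∑ d ∈ n.divisors, (1 : ℚ) / d

/-- A zero-sum free sequence `S` over `G` is dense if it has maximal cross number and,
among zero-sum free sequences of maximal cross number, minimal length. -/
def IsDense {G : Type*} [AddCommGroup G] (S : Multiset G) : Prop :=
  IsZeroSumFree S ∧ crossNum S = littleK G ∧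
    Multiset.card S =
      sInf {c : ℕ | ∃ T : Multiset G,
        IsZeroSumFree T ∧ crossNum T = littleK G ∧ Multiset.card T = c}

/-!
Write `α i` for the exponents of the cyclic factors of the `p`-part of `G`, and fix `c` such that at
most two of them exceed `c`. A term of order divisible by `p ^ (c + 1)` lies outside the kernel `K`
of a homomorphism from `G` onto `⨁ i, C_{p ^ (α i - c)}`. Olson's theorem, obtained by computing in
the group algebra over `ZMod p`, gives the little cross number of that quotient, and it is attained
by repeating the generators of the cyclic factors.

If some terms outside `K` are replaced by sums of theirs lying in `K`, then all these generators can
be adjoined and the sequence stays zero-sum free. Since `S` has maximal cross number, this exchange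
bounds the contribution of the terms outside `K` from below. Since `S` has minimal length, among the
terms of a given order with `p`-part exactly `p ^ (c + 1)` there is no zero-sum modulo `K` of
length at most `p`; as the quotient has rank at most two, there are few such terms, which yields an
upper bound on their contribution. That `p` is 2-small makes the terms with nontrivial `p'`-part
negligible, so a comparison of the bounds for `c` and `c + 1` leaves a deficit of less than one term
of order `p ^ (c + 1)`.
-/

open Finset Pointwise

section Subsums

variable {G A X Y : Type*} [AddCommGroup G] [AddCommGroup A]

theorem exists_le_map_eq_of_le_map {f : X → Y} {s : Multiset X} {T : Multiset Y}
    (h : T ≤ s.map f) : ∃ R ≤ s, R.map f = T := by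
  have hT : T ∈ Multiset.powersetCard T.card (s.map f) := Multiset.mem_powersetCard.2 ⟨h, rfl⟩
  rw [Multiset.powersetCard_map] at hT
  obtain ⟨R, hR, rfl⟩ := Multiset.mem_map.1 hT
  exact ⟨R, (Multiset.mem_powersetCard.1 hR).1, rfl⟩

theorem exists_le_card_eq {S : Multiset X} {n : ℕ} (h : n ≤ S.card) :
    ∃ T ≤ S, T.card = n := by
  have hpos : 0 < (S.powersetCard n).card := by
    rw [Multiset.card_powersetCard]
    exact Nat.choose_pos h
  obtain ⟨T, hT⟩ := Multiset.card_pos_iff_exists_mem.1 hpos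
  exact ⟨T, Multiset.mem_powersetCard.1 hT⟩

/-- The set `Σ(S)` of sums of nonempty subsequences of `S`. A sequence may be replaced by another
one inside a zero-sum free sequence as soon as this does not create new subsequence sums. -/
def subsums (S : Multiset G) : Set G :=
  {g | ∃ T ≤ S, T ≠ 0 ∧ T.sum = g}

theorem isZeroSumFree_iff_zero_notMem_subsums {S : Multiset G} :
    IsZeroSumFree S ↔ 0 ∉ subsums S := by
  simp [IsZeroSumFree, subsums]

@[simp]
theorem subsums_zero : subsums (0 : Multiset G) = ∅ := by
  ext g
  simp +contextual [subsums]

@[simp]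
theorem subsums_singleton (g : G) : subsums {g} = {g} := by
  ext h
  simp [subsums, Multiset.le_singleton, or_and_right, exists_or, eq_comm]

theorem subsums_map (f : G →+ A) (S : Multiset G) : subsums (S.map f) = f '' subsums S := by
  ext a
  constructor
  · rintro ⟨T, hT, hT0, rfl⟩
    obtain ⟨R, hR, rfl⟩ := exists_le_map_eq_of_le_map hT
    exact ⟨R.sum, ⟨R, hR, by simpa using hT0, rfl⟩, map_multiset_sum f R⟩
  · rintro ⟨_, ⟨R, hR, hR0, rfl⟩, rfl⟩
    exact ⟨R.map f, Multiset.map_le_map hR, by simpa using hR0, (map_multiset_sum f R).symm⟩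

theorem subsums_add (S T : Multiset G) :
    subsums (S + T) = subsums S ∪ subsums T ∪ (subsums S + subsums T) := by
  classical
  ext g
  constructor
  · rintro ⟨R, hR, hR0, rfl⟩
    have hsplit : R ∩ S + (R - S) = R := by rw [add_comm, Multiset.sub_add_inter]
    have hST : R - S ≤ T := by rwa [Multiset.sub_le_iff_le_add, add_comm]
    rw [← hsplit, Multiset.sum_add]
    by_cases h₁ : R ∩ S = 0 <;> by_cases h₂ : R - S = 0
    · exact absurd (by rw [← hsplit, h₁, h₂, add_zero]) hR0
    · exact .inl (.inr ⟨_, hST, h₂, by simp [h₁]⟩)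
    · exact .inl (.inl ⟨_, Multiset.inter_le_right, h₁, by simp [h₂]⟩)
    · exact .inr (Set.add_mem_add ⟨_, Multiset.inter_le_right, h₁, rfl⟩ ⟨_, hST, h₂, rfl⟩)
  · rintro ((⟨R, hR, hR0, rfl⟩ | ⟨R, hR, hR0, rfl⟩) |
      ⟨_, ⟨R, hR, hR0, rfl⟩, _, ⟨R', hR', -, rfl⟩, rfl⟩)
    · exact ⟨R, hR.trans (Multiset.le_add_right _ _), hR0, rfl⟩
    · exact ⟨R, hR.trans (Multiset.le_add_left _ _), hR0, rfl⟩
    · exact ⟨R + R', add_le_add hR hR', by simp [hR0], Multiset.sum_add _ _⟩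

theorem subsums_add_subset_subsums_add {S S' T T' : Multiset G} (hS : subsums S ⊆ subsums S')
    (hT : subsums T ⊆ subsums T') : subsums (S + T) ⊆ subsums (S' + T') := by
  rw [subsums_add, subsums_add]
  exact Set.union_subset_union (Set.union_subset_union hS hT) (Set.add_subset_add hS hT)

theorem subsums_sum_subset_subsums_sum {κ : Type*} {s : Finset κ} {S T : κ → Multiset G}
    (h : ∀ i ∈ s, subsums (S i) ⊆ subsums (T i)) :
    subsums (∑ i ∈ s, S i) ⊆ subsums (∑ i ∈ s, T i) := by
  classical
  induction s using Finset.induction_on with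
  | empty => simp
  | insert i s hi ih =>
    rw [sum_insert hi, sum_insert hi]
    exact subsums_add_subset_subsums_add (h i (mem_insert_self i s))
      (ih fun j hj => h j (mem_insert_of_mem hj))

theorem map_eq_zero_of_mem_subsums {f : G →+ A} {S : Multiset G} (hS : ∀ x ∈ S, f x = 0) {g : G}
    (hg : g ∈ subsums S) : f g = 0 := by
  obtain ⟨T, hT, -, rfl⟩ := hg
  rw [map_multiset_sum]
  refine Multiset.sum_eq_zero fun y hy => ?_
  obtain ⟨x, hx, rfl⟩ := Multiset.mem_map.1 hy
  exact hS x (Multiset.mem_of_le hT hx)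

theorem IsZeroSumFree.of_subsums_subset {S T : Multiset G} (hT : IsZeroSumFree T)
    (h : subsums S ⊆ subsums T) : IsZeroSumFree S :=
  isZeroSumFree_iff_zero_notMem_subsums.2 fun h0 =>
    isZeroSumFree_iff_zero_notMem_subsums.1 hT (h h0)

theorem IsZeroSumFree.map_of_injective {S : Multiset G} (hS : IsZeroSumFree S) {f : G →+ A}
    (hf : Function.Injective f) : IsZeroSumFree (S.map f) := by
  rw [isZeroSumFree_iff_zero_notMem_subsums, subsums_map]
  rintro ⟨g, hg, hg0⟩
  rw [(map_eq_zero_iff f hf).1 hg0] at hg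
  exact isZeroSumFree_iff_zero_notMem_subsums.1 hS hg

theorem IsZeroSumFree.ne_zero_of_mem {S : Multiset G} (hS : IsZeroSumFree S) {g : G}
    (hg : g ∈ S) : g ≠ 0 := by
  simpa using hS {g} (Multiset.singleton_le.2 hg) (Multiset.singleton_ne_zero g)

theorem IsZeroSumFree.add_of_map {U V : Multiset G} {f : G →+ A} (hU : IsZeroSumFree U)
    (hfU : ∀ u ∈ U, f u = 0) (hV : IsZeroSumFree (V.map f)) : IsZeroSumFree (U + V) := by
  rw [isZeroSumFree_iff_zero_notMem_subsums] at hU hV ⊢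
  rw [subsums_map] at hV
  rw [subsums_add]
  rintro ((h | h) | ⟨u, hu, v, hv, huv⟩)
  · exact hU h
  · exact hV ⟨0, h, map_zero f⟩
  · refine hV ⟨v, hv, ?_⟩
    simpa [map_eq_zero_of_mem_subsums hfU hu] using congrArg f huv

theorem isZeroSumFree_replicate {x : G} {m : ℕ} (hm : m < addOrderOf x) :
    IsZeroSumFree (Multiset.replicate m x) := by
  intro T hT hT0 hsum
  obtain ⟨n, hn, rfl⟩ := Multiset.le_replicate_iff.1 hT
  rw [Multiset.sum_replicate] at hsum
  have hn0 : n ≠ 0 := by rintro rfl; exact hT0 rfl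
  exact absurd (addOrderOf_le_of_nsmul_eq_zero (Nat.pos_of_ne_zero hn0) hsum) (by omega)

theorem IsZeroSumFree.count_lt_addOrderOf [Finite G] [DecidableEq G] {S : Multiset G}
    (hS : IsZeroSumFree S) (x : G) : S.count x < addOrderOf x := by
  by_contra! h
  refine hS (Multiset.replicate (addOrderOf x) x) (Multiset.le_count_iff_replicate_le.1 h) ?_ ?_
  · rw [← Multiset.card_pos, Multiset.card_replicate]
    exact addOrderOf_pos x
  · rw [Multiset.sum_replicate, addOrderOf_nsmul_eq_zero]

theorem isZeroSumFree_sum_replicate_single {ι : Type*} [DecidableEq ι] (s : Finset ι) (q : ι → ℕ)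
    [∀ i, NeZero (q i)] :
    IsZeroSumFree (∑ i ∈ s, Multiset.replicate (q i - 1) (Pi.single i 1 : ∀ i, ZMod (q i))) := by
  induction s using Finset.induction_on with
  | empty => exact isZeroSumFree_iff_zero_notMem_subsums.2 (by simp)
  | insert i s hi ih =>
    rw [sum_insert hi, add_comm]
    refine ih.add_of_map (f := Pi.evalAddMonoidHom (fun i => ZMod (q i)) i) (fun u hu => ?_) ?_
    · obtain ⟨j, hj, huj⟩ := Multiset.mem_sum.1 hu
      rw [Multiset.eq_of_mem_replicate huj]
      exact Pi.single_eq_of_ne (by rintro rfl; exact hi hj) 1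
    · rw [Multiset.map_replicate, Pi.evalAddMonoidHom_apply, Pi.single_eq_same]
      refine isZeroSumFree_replicate ?_
      rw [ZMod.addOrderOf_one]
      exact Nat.sub_one_lt (NeZero.ne (q i))

end Subsums

section CrossNum

variable {G A : Type*} [AddCommGroup G] [AddCommGroup A]

@[simp]
theorem crossNum_zero : crossNum (0 : Multiset G) = 0 := by
  simp [crossNum]

@[simp]
theorem crossNum_singleton (g : G) : crossNum {g} = (addOrderOf g : ℝ)⁻¹ := by
  simp [crossNum]

theorem crossNum_add (S T : Multiset G) : crossNum (S + T) = crossNum S + crossNum T := by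
  simp [crossNum]

theorem crossNum_sum {κ : Type*} (s : Finset κ) (S : κ → Multiset G) :
    crossNum (∑ i ∈ s, S i) = ∑ i ∈ s, crossNum (S i) := by
  classical
  induction s using Finset.induction_on with
  | empty => simp
  | insert i s hi ih => rw [sum_insert hi, sum_insert hi, crossNum_add, ih]

theorem crossNum_eq_card_mul {S : Multiset G} {n : ℕ} (h : ∀ g ∈ S, addOrderOf g = n) :
    crossNum S = S.card * (n : ℝ)⁻¹ := by
  rw [crossNum, Multiset.map_congr rfl fun g hg => by rw [h g hg], Multiset.map_const',
    Multiset.sum_replicate, nsmul_eq_mul]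

theorem crossNum_eq_inv_mul_crossNum_map {S : Multiset G} {f : G → A} {n : ℕ}
    (h : ∀ g ∈ S, addOrderOf g = n * addOrderOf (f g)) :
    crossNum S = (n : ℝ)⁻¹ * crossNum (S.map f) := by
  rw [crossNum, crossNum, Multiset.map_map, ← Multiset.sum_map_mul_left]
  refine congrArg Multiset.sum (Multiset.map_congr rfl fun g hg => ?_)
  rw [Function.comp_apply, h g hg, Nat.cast_mul, mul_inv]

theorem crossNum_le_card (S : Multiset G) : crossNum S ≤ S.card := by
  have h := Multiset.sum_le_card_nsmul (S.map fun g : G => (addOrderOf g : ℝ)⁻¹) 1 fun x hx => by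
    obtain ⟨g, -, rfl⟩ := Multiset.mem_map.1 hx
    exact Nat.cast_inv_le_one _
  simpa [crossNum] using h

theorem IsZeroSumFree.card_le_sum_addOrderOf [Fintype G] {S : Multiset G} (hS : IsZeroSumFree S) :
    S.card ≤ ∑ g : G, addOrderOf g := by
  classical
  rw [← Multiset.sum_count_eq_card (s := univ) fun g _ => mem_univ g]
  exact sum_le_sum fun g _ => (hS.count_lt_addOrderOf g).le

variable [Finite G]

theorem bddAbove_crossNum_isZeroSumFree :
    BddAbove {x : ℝ | ∃ S : Multiset G, IsZeroSumFree S ∧ crossNum S = x} := by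
  have := Fintype.ofFinite G
  refine ⟨(∑ g : G, addOrderOf g : ℕ), ?_⟩
  rintro _ ⟨S, hS, rfl⟩
  exact (crossNum_le_card S).trans (by exact_mod_cast hS.card_le_sum_addOrderOf)

theorem IsDense.crossNum_le {S T : Multiset G} (hS : IsDense S) (hT : IsZeroSumFree T) :
    crossNum T ≤ crossNum S := by
  rw [hS.2.1]
  exact le_csSup bddAbove_crossNum_isZeroSumFree ⟨T, hT, rfl⟩

theorem IsDense.card_le {S T : Multiset G} (hS : IsDense S) (hT : IsZeroSumFree T)
    (h : crossNum S ≤ crossNum T) : S.card ≤ T.card := by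
  rw [hS.2.2]
  exact Nat.sInf_le ⟨T, hT, (h.antisymm' (hS.crossNum_le hT)).trans hS.2.1, rfl⟩

end CrossNum

section WeightIdeal

variable {R ι : Type*} [CommRing R] [Fintype ι] {z : ι → R} {w : ι → ℝ} {s t : ℝ}

/-- The ideal generated by the monomials in the `z i` of weighted degree at least `t`, where `z i`
has weight `w i`. It measures how deep the factors `1 - g` of a group algebra lie in the
augmentation ideal. -/
def weightIdeal (z : ι → R) (w : ι → ℝ) (t : ℝ) : Ideal R :=
  Ideal.span {y | ∃ u : ι → ℕ, t ≤ ∑ i, u i * w i ∧ ∏ i, z i ^ u i = y}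

theorem one_mem_weightIdeal_zero : (1 : R) ∈ weightIdeal z w 0 :=
  Ideal.subset_span ⟨0, by simp, by simp⟩

theorem pow_mem_weightIdeal {i : ι} {n : ℕ} (h : t ≤ n * w i) :
    z i ^ n ∈ weightIdeal z w t := by
  classical
  refine Ideal.subset_span ⟨Pi.single i n, ?_, ?_⟩
  · simpa [Pi.single_apply] using h
  · simp [Pi.single_apply]

theorem mul_mem_weightIdeal_add {x y : R} (hx : x ∈ weightIdeal z w s)
    (hy : y ∈ weightIdeal z w t) : x * y ∈ weightIdeal z w (s + t) := by
  have hxy := Ideal.mul_mem_mul hx hy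
  rw [weightIdeal, weightIdeal, Ideal.span_mul_span'] at hxy
  refine Ideal.span_mono ?_ hxy
  rintro _ ⟨_, ⟨u, hu, rfl⟩, _, ⟨v, hv, rfl⟩, rfl⟩
  refine ⟨u + v, ?_, by simp [pow_add, prod_mul_distrib]⟩
  simp only [Pi.add_apply, Nat.cast_add, add_mul, sum_add_distrib]
  exact add_le_add hu hv

theorem prod_map_mem_weightIdeal {X : Type*} {S : Multiset X} {f : X → R} {v : X → ℝ}
    (h : ∀ x ∈ S, f x ∈ weightIdeal z w (v x)) :
    (S.map f).prod ∈ weightIdeal z w (S.map v).sum := by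
  induction S using Multiset.induction_on with
  | empty => simpa using one_mem_weightIdeal_zero
  | cons x S ih =>
    simp only [Multiset.map_cons, Multiset.prod_cons, Multiset.sum_cons]
    exact mul_mem_weightIdeal_add (h x (Multiset.mem_cons_self x S))
      (ih fun y hy => h y (Multiset.mem_cons_of_mem hy))

theorem weightIdeal_eq_bot {N : ι → ℕ} (hw : ∀ i, 0 ≤ w i) (hz : ∀ i, z i ^ N i = 0)
    (ht : ∑ i, (N i - 1) * w i < t) : weightIdeal z w t = ⊥ := by
  rw [weightIdeal, Ideal.span_eq_bot]
  rintro _ ⟨u, hu, rfl⟩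
  obtain ⟨i, -, hi⟩ := exists_lt_of_sum_lt (ht.trans_le hu)
  have hNu : (N i : ℝ) - 1 < u i := lt_of_mul_lt_mul_right hi (hw i)
  have hNu' : N i < u i + 1 := by exact_mod_cast sub_lt_iff_lt_add.1 hNu
  exact prod_eq_zero (mem_univ i) (pow_eq_zero_of_le (Nat.lt_succ_iff.1 hNu') (hz i))

end WeightIdeal

section GroupAlgebra

open AddMonoidAlgebra

variable {G k : Type*} [AddCommGroup G] [CommRing k]

theorem coeff_prod_one_sub_single_sub_one {S : Multiset G} {h : G} (hh : h ∉ subsums S) :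
    ((S.map fun g => (1 - single g 1 : AddMonoidAlgebra k G)).prod - 1).coeff h = 0 := by
  induction S using Multiset.induction_on generalizing h with
  | empty => simp
  | cons g S ih =>
    rw [← Multiset.singleton_add, subsums_add, subsums_singleton] at hh
    simp only [Set.mem_union, not_or, Set.mem_singleton_iff] at hh
    obtain ⟨⟨hg, hS⟩, hadd⟩ := hh
    have hS' : -g + h ∉ subsums S := fun h' => hadd ⟨g, rfl, -g + h, h', by simp⟩
    set P := (S.map fun g => (1 - single g 1 : AddMonoidAlgebra k G)).prod with hP
    have hexpand : ((g ::ₘ S).map fun g => (1 - single g 1 : AddMonoidAlgebra k G)).prod - 1 =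
        (P - 1) - single g 1 * (P - 1) - single g 1 := by
      rw [Multiset.map_cons, Multiset.prod_cons, ← hP]
      ring
    rw [hexpand, coeff_sub, coeff_sub, Finsupp.sub_apply, Finsupp.sub_apply,
      coeff_single_mul_apply, ih hS, ih hS']
    simp [Ne.symm hg]

theorem IsZeroSumFree.prod_one_sub_single_ne_zero [Nontrivial k] {S : Multiset G}
    (hS : IsZeroSumFree S) :
    (S.map fun g => (1 - single g 1 : AddMonoidAlgebra k G)).prod ≠ 0 := by
  intro h0
  have h := coeff_prod_one_sub_single_sub_one (k := k)
    (isZeroSumFree_iff_zero_notMem_subsums.1 hS)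
  rw [h0] at h
  simp [one_def] at h

/-- The elements of `G` which become trivial modulo the ideal `J` of the group algebra. -/
def trivialModIdeal (J : Ideal (AddMonoidAlgebra k G)) : AddSubmonoid G where
  carrier := {g | single g 1 - 1 ∈ J}
  zero_mem' := by simp [← one_def]
  add_mem' {g h} hg hh := by
    have hgh : (single (g + h) 1 - 1 : AddMonoidAlgebra k G) =
        single g 1 * (single h 1 - 1) + (single g 1 - 1) := by
      simp [mul_sub, single_mul_single]
    simpa only [Set.mem_ofPred_eq, hgh] using J.add_mem (J.mul_mem_left _ hh) hg

theorem mem_trivialModIdeal {J : Ideal (AddMonoidAlgebra k G)} {g : G} :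
    g ∈ trivialModIdeal J ↔ single g 1 - 1 ∈ J :=
  Iff.rfl

theorem single_sub_one_pow_char_pow (p : ℕ) [Fact p.Prime] [CharP k p] (g : G) (n : ℕ) :
    (single g 1 - 1 : AddMonoidAlgebra k G) ^ p ^ n = single (p ^ n • g) 1 - 1 := by
  have : CharP (AddMonoidAlgebra k G) p :=
    charP_of_injective_algebraMap (FaithfulSMul.algebraMap_injective k _) p
  rw [sub_pow_char_pow, one_pow, single_pow, one_pow]

end GroupAlgebra

section Olson

open AddMonoidAlgebra

variable {ι : Type*} {p : ℕ} [Fact p.Prime] {β : ι → ℕ}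

theorem pow_nsmul_natCast_eq_zero_iff {a n m : ℕ} :
    p ^ n • (m : ZMod (p ^ a)) = 0 ↔ p ^ (a - n) ∣ m := by
  rw [nsmul_eq_mul, ← Nat.cast_mul, ZMod.natCast_eq_zero_iff]
  rcases le_total a n with h | h
  · simpa [Nat.sub_eq_zero_of_le h] using (pow_dvd_pow p h).mul_right m
  · nth_rewrite 1 [← Nat.add_sub_cancel' h]
    rw [pow_add]
    exact Nat.mul_dvd_mul_iff_left (pow_pos (Fact.out : p.Prime).pos n)

theorem pow_nsmul_eq_zero_iff_dvd_val {a n : ℕ} {x : ZMod (p ^ a)} :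
    p ^ n • x = 0 ↔ p ^ (a - n) ∣ x.val := by
  rw [← pow_nsmul_natCast_eq_zero_iff, ZMod.natCast_zmod_val]

theorem pow_sup_nsmul_eq_zero [Fintype ι] (g : ∀ i, ZMod (p ^ β i)) : p ^ univ.sup β • g = 0 := by
  ext i
  rw [Pi.smul_apply, Pi.zero_apply, pow_nsmul_eq_zero_iff_dvd_val,
    Nat.sub_eq_zero_of_le (le_sup (f := β) (mem_univ i)), pow_zero]
  exact one_dvd _

theorem exists_addOrderOf_eq_prime_pow_pi_zmod [Finite ι] (g : ∀ i, ZMod (p ^ β i)) :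
    ∃ n, addOrderOf g = p ^ n := by
  have := Fintype.ofFinite ι
  exact exists_addOrderOf_eq_prime_pow_iff.2 ⟨univ.sup β, pow_sup_nsmul_eq_zero g⟩

variable [Fintype ι]

theorem single_sub_one_mem_weightIdeal [DecidableEq ι] {n : ℕ} {g : ∀ i, ZMod (p ^ β i)}
    (hg : p ^ n • g = 0) :
    (single g 1 - 1 : AddMonoidAlgebra (ZMod p) (∀ i, ZMod (p ^ β i))) ∈
      weightIdeal (fun i => single (Pi.single i 1) 1 - 1) (fun i => ((p ^ β i : ℕ) : ℝ)⁻¹)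
        ((p ^ n : ℕ) : ℝ)⁻¹ := by
  have hp : p.Prime := Fact.out
  rw [← mem_trivialModIdeal, ← univ_sum_single g]
  refine sum_mem fun i _ => ?_
  obtain ⟨m, hm⟩ := pow_nsmul_eq_zero_iff_dvd_val.1 (congrFun hg i)
  have hgi : (Pi.single i (g i) : ∀ i, ZMod (p ^ β i)) =
      m • p ^ (β i - n) • Pi.single i (1 : ZMod (p ^ β i)) := by
    rw [smul_smul, mul_comm, ← hm, ← Pi.single_smul, nsmul_one, ZMod.natCast_zmod_val]
  rw [hgi]
  refine nsmul_mem ?_ m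
  rw [mem_trivialModIdeal, ← single_sub_one_pow_char_pow]
  refine pow_mem_weightIdeal (i := i) ?_
  have hpos (m : ℕ) : (0 : ℝ) < (p ^ m : ℕ) := by exact_mod_cast pow_pos hp.pos m
  rw [← div_eq_mul_inv, le_div_iff₀ (hpos _), inv_mul_le_iff₀ (hpos _)]
  exact_mod_cast (pow_le_pow_right₀ hp.one_le (by omega : β i ≤ n + (β i - n))).trans_eq
    (pow_add p n _)

theorem IsZeroSumFree.crossNum_le {S : Multiset (∀ i, ZMod (p ^ β i))} (hS : IsZeroSumFree S) :
    crossNum S ≤ ∑ i, (1 - ((p ^ β i : ℕ) : ℝ)⁻¹) := by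
  classical
  by_contra! hlt
  refine hS.prod_one_sub_single_ne_zero (k := ZMod p) ?_
  rw [← Ideal.mem_bot, ← weightIdeal_eq_bot (N := fun i => p ^ β i)
    (z := fun i => (single (Pi.single i 1) 1 - 1 : AddMonoidAlgebra (ZMod p) (∀ i, ZMod (p ^ β i))))
    (w := fun i => ((p ^ β i : ℕ) : ℝ)⁻¹) (t := crossNum S)]
  · refine prod_map_mem_weightIdeal fun g _ => ?_
    obtain ⟨n, hn⟩ := exists_addOrderOf_eq_prime_pow_pi_zmod g
    rw [hn, ← neg_sub]
    exact neg_mem (single_sub_one_mem_weightIdeal (hn ▸ addOrderOf_nsmul_eq_zero g))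
  · intro i
    positivity
  · intro i
    rw [single_sub_one_pow_char_pow, ← Pi.single_smul, nsmul_one, ZMod.natCast_self,
      Pi.single_zero, ← one_def, sub_self]
  · refine (sum_congr rfl fun i _ => ?_).trans_lt hlt
    rw [sub_mul, one_mul, mul_inv_cancel₀ (NeZero.ne _)]

end Olson

section Davenport

variable {p : ℕ} [Fact p.Prime] {V : Type*} [AddCommGroup V] [Module (ZMod p) V]

theorem addOrderOf_eq_of_ne_zero_of_zmod_module {v : V} (hv : v ≠ 0) : addOrderOf v = p :=
  addOrderOf_eq_prime (by rw [← Nat.cast_smul_eq_nsmul (ZMod p), CharP.cast_eq_zero, zero_smul]) hv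

variable [Module.Finite (ZMod p) V]

theorem IsZeroSumFree.card_le_finrank_mul {S : Multiset V} (hS : IsZeroSumFree S) :
    S.card ≤ Module.finrank (ZMod p) V * (p - 1) := by
  have hp : p.Prime := Fact.out
  let f : V ≃+ (Fin (Module.finrank (ZMod p) V) → ZMod (p ^ 1)) :=
    (Module.finBasis (ZMod p) V).equivFun.toAddEquiv.trans
      (AddEquiv.piCongrRight fun _ => (ZMod.ringEquivCongr (pow_one p).symm).toAddEquiv)
  have horder (g : V) (_ : g ∈ S) : addOrderOf g = 1 * addOrderOf (f g) := by
    rw [one_mul, f.addOrderOf_eq]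
  have hle : crossNum S ≤ Module.finrank (ZMod p) V * (1 - (p : ℝ)⁻¹) := by
    rw [crossNum_eq_inv_mul_crossNum_map horder, Nat.cast_one, inv_one, one_mul]
    simpa [mul_sub] using (hS.map_of_injective (f := f.toAddMonoidHom) f.injective).crossNum_le
  rw [crossNum_eq_card_mul fun g hg =>
    addOrderOf_eq_of_ne_zero_of_zmod_module (p := p) (hS.ne_zero_of_mem hg)] at hle
  have hp0 : (0 : ℝ) < p := by exact_mod_cast hp.pos
  rw [← div_eq_mul_inv, div_le_iff₀ hp0, mul_assoc, sub_mul, inv_mul_cancel₀ hp0.ne', one_mul,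
    ← Nat.cast_one, ← Nat.cast_sub hp.one_le] at hle
  exact_mod_cast hle

theorem exists_sum_eq_zero_of_finrank_mul_lt_card {S : Multiset V}
    (hS : Module.finrank (ZMod p) V * (p - 1) < S.card) : ∃ T ≤ S, T ≠ 0 ∧ T.sum = 0 := by
  by_contra! h
  exact hS.not_ge (IsZeroSumFree.card_le_finrank_mul h)

theorem exists_dvd_card_sum_eq_zero {S : Multiset V}
    (hS : (Module.finrank (ZMod p) V + 1) * (p - 1) < S.card) :
    ∃ T ≤ S, T ≠ 0 ∧ p ∣ T.card ∧ T.sum = 0 := by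
  -- The extra coordinate `1` counts lengths modulo `p`.
  have hS' : Module.finrank (ZMod p) (V × ZMod p) * (p - 1) <
      (S.map fun v => (v, (1 : ZMod p))).card := by
    rwa [Module.finrank_prod, Module.finrank_self, Multiset.card_map]
  obtain ⟨_, hT, hT0, hsum⟩ := exists_sum_eq_zero_of_finrank_mul_lt_card hS'
  obtain ⟨T, hTS, rfl⟩ := exists_le_map_eq_of_le_map hT
  refine ⟨T, hTS, by simpa using hT0, ?_, ?_⟩
  · simpa [map_multiset_sum, ZMod.natCast_eq_zero_iff] using
      congrArg (AddMonoidHom.snd V (ZMod p)) hsum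
  · simpa [map_multiset_sum] using congrArg (AddMonoidHom.fst V (ZMod p)) hsum

theorem exists_card_le_sum_eq_zero_of_finrank_le_two (hV : Module.finrank (ZMod p) V ≤ 2)
    {S : Multiset V} (hS : (Module.finrank (ZMod p) V + 1) * (p - 1) < S.card) :
    ∃ T ≤ S, T ≠ 0 ∧ T.card ≤ p ∧ T.sum = 0 := by
  have hp2 : 2 ≤ p := (Fact.out : p.Prime).two_le
  have hrank : Module.finrank (ZMod p) V * (p - 1) ≤ 2 * (p - 1) := Nat.mul_le_mul_right _ hV
  obtain ⟨S', hS'S, hS'⟩ := exists_le_card_eq (Nat.succ_le_of_lt hS)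
  obtain ⟨T, hTS', hT0, ⟨q, hq⟩, hTsum⟩ := exists_dvd_card_sum_eq_zero (p := p) (V := V)
    (S := S') (hS' ▸ Nat.lt_succ_self _)
  have hTS := hTS'.trans hS'S
  have hTcard := Multiset.card_le_card hTS'
  have hq3 : q < 3 := by
    by_contra! h
    have := Nat.mul_le_mul_left p h
    rw [add_mul] at hS'
    omega
  obtain hTp | hTp : T.card ≤ p ∨ T.card = 2 * p := by
    interval_cases q <;> omega
  · exact ⟨T, hTS, hT0, hTp, hTsum⟩
  -- A zero-sum of length `2 * p` splits into two shorter ones, one of which has length at most `p`.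
  obtain ⟨T', hT'T, hT'⟩ := exists_le_card_eq (S := T) (n := 2 * p - 1) (by omega)
  obtain ⟨U, hUT', hU0, hUsum⟩ := exists_sum_eq_zero_of_finrank_mul_lt_card (p := p) (V := V)
    (S := T') (by omega)
  have hUcard := Multiset.card_le_card hUT'
  obtain ⟨W, rfl⟩ := Multiset.le_iff_exists_add.1 (hUT'.trans hT'T)
  rw [Multiset.card_add] at hTp
  rw [Multiset.sum_add, hUsum, zero_add] at hTsum
  by_cases hUp : U.card ≤ p
  · exact ⟨U, (Multiset.le_add_right U W).trans hTS, hU0, hUp, hUsum⟩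
  · refine ⟨W, (Multiset.le_add_left W U).trans hTS, ?_, by omega, hTsum⟩
    rw [← Multiset.card_pos]
    omega

end Davenport

section Torsion

variable {ι : Type*} [Fintype ι] {p : ℕ} [Fact p.Prime] {β : ι → ℕ}

theorem card_torsionBy_zmod_le (a : ℕ) :
    Nat.card {x : ZMod (p ^ a) // p • x = 0} ≤ if a ≠ 0 then p else 1 := by
  classical
  split_ifs with ha
  · rw [Nat.card_eq_fintype_card, Fintype.card_subtype]
    exact IsAddCyclic.card_nsmul_eq_zero_le (Fact.out : p.Prime).pos
  · rw [not_ne_iff] at ha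
    subst ha
    rw [pow_zero]
    exact (Finite.card_subtype_le _).trans_eq (by simp)

theorem card_torsionBy_pi_zmod_le :
    Nat.card (AddSubgroup.torsionBy (∀ i, ZMod (p ^ β i)) p) ≤ p ^ #{i | β i ≠ 0} := by
  have e : AddSubgroup.torsionBy (∀ i, ZMod (p ^ β i)) p ≃
      ∀ i, {x : ZMod (p ^ β i) // p • x = 0} :=
    (Equiv.subtypeEquivRight fun x => by
      rw [AddSubgroup.torsionBy.nsmul_iff, funext_iff]; rfl).trans Equiv.subtypePiEquivPi
  rw [Nat.card_congr e, Nat.card_pi]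
  exact (prod_le_prod' fun i _ => card_torsionBy_zmod_le (β i)).trans_eq (by
    rw [prod_ite, prod_const, prod_const_one, mul_one])

theorem exists_card_le_sum_eq_zero_of_torsion (hβ : #{i | β i ≠ 0} ≤ 2)
    {S : Multiset (∀ i, ZMod (p ^ β i))} (hS : ∀ x ∈ S, p • x = 0)
    (hcard : (#{i | β i ≠ 0} + 1) * (p - 1) < S.card) :
    ∃ T ≤ S, T ≠ 0 ∧ T.card ≤ p ∧ T.sum = 0 := by
  let A := AddSubgroup.torsionBy (∀ i, ZMod (p ^ β i)) p
  let _ : Module (ZMod p) A := AddSubgroup.torsionBy.zmodModule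
  have hrank : Module.finrank (ZMod p) A ≤ #{i | β i ≠ 0} := by
    rw [← Nat.pow_le_pow_iff_right (Fact.out : p.Prime).one_lt]
    refine le_trans (le_of_eq ?_) card_torsionBy_pi_zmod_le
    rw [Module.natCard_eq_pow_finrank (K := ZMod p), Nat.card_zmod]
  have hSA : ∀ x ∈ S, x ∈ A := fun x hx => AddSubgroup.torsionBy.nsmul_iff.2 (hS x hx)
  lift S to Multiset A using hSA
  rw [Multiset.card_map] at hcard
  obtain ⟨T, hTS, hT0, hTp, hsum⟩ := exists_card_le_sum_eq_zero_of_finrank_le_two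
    (hrank.trans hβ) ((Nat.mul_le_mul_right _ (by omega)).trans_lt hcard)
  refine ⟨T.map A.subtype, Multiset.map_le_map hTS, by simpa using hT0, by simpa using hTp, ?_⟩
  rw [← map_multiset_sum, hsum, map_zero]

end Torsion

section Decomposition

variable {G H ι : Type*} [AddCommGroup G] [AddCommGroup H] {p : ℕ} {α : ι → ℕ}
  (e : G ≃+ (∀ i, ZMod (p ^ α i)) × H)

/-- The homomorphism from `G` onto `⨁ i, C_{p ^ (α i - c)}` (truncated subtraction) whose kernel
consists of the elements with `p`-primary component killed by `p ^ c`: it divides the `i`-th cyclic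
factor by its subgroup of order `p ^ min c (α i)` and kills `H`. -/
def quotMap (c : ℕ) : G →+ ∀ i, ZMod (p ^ (α i - c)) :=
  AddMonoidHom.mk' (fun g i => ZMod.castHom (pow_dvd_pow p (Nat.sub_le (α i) c)) _ ((e g).1 i))
    fun g h => by ext i; simp only [map_add, Prod.fst_add, Pi.add_apply]

theorem quotMap_apply (c : ℕ) (g : G) (i : ι) :
    quotMap e c g i =
      ZMod.castHom (pow_dvd_pow p (Nat.sub_le (α i) c)) (ZMod (p ^ (α i - c))) ((e g).1 i) :=
  rfl

/-- The exponent `v` for which the `p`-primary component of `g` has order `p ^ v`. -/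
noncomputable def ordExp (g : G) : ℕ :=
  (addOrderOf (e g).1).factorization p

/-- The generator of the `i`-th cyclic factor of the `p`-primary component, as an element of `G`. -/
def gen [DecidableEq ι] (i : ι) : G :=
  e.symm (Pi.single i 1, 0)

theorem addOrderOf_gen [DecidableEq ι] (i : ι) : addOrderOf (gen e i) = p ^ α i := by
  rw [gen, e.symm.addOrderOf_eq, Prod.addOrderOf_mk, addOrderOf_zero, Nat.lcm_one_right]
  exact (addOrderOf_injective (AddMonoidHom.single (fun i => ZMod (p ^ α i)) i)
    (Pi.single_injective (M := fun i => ZMod (p ^ α i)) i) 1).trans (ZMod.addOrderOf_one _)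

theorem quotMap_gen [DecidableEq ι] (c : ℕ) (i : ι) : quotMap e c (gen e i) = Pi.single i 1 := by
  ext j
  rw [quotMap_apply, gen, e.apply_symm_apply]
  rcases eq_or_ne j i with rfl | hij
  · simp only [Pi.single_eq_same, map_one]
  · simp only [Pi.single_eq_of_ne hij, map_zero]

variable [Fact p.Prime]

theorem pow_nsmul_quotMap_eq_zero_iff {c n : ℕ} {g : G} :
    p ^ n • quotMap e c g = 0 ↔ p ^ (c + n) • (e g).1 = 0 := by
  rw [funext_iff, funext_iff]
  refine forall_congr' fun i => ?_
  have hval : quotMap e c g i = (((e g).1 i).val : ZMod (p ^ (α i - c))) := by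
    rw [ZMod.natCast_val, quotMap_apply, ZMod.castHom_apply]
  rw [Pi.smul_apply, Pi.smul_apply, Pi.zero_apply, Pi.zero_apply, hval,
    pow_nsmul_natCast_eq_zero_iff, pow_nsmul_eq_zero_iff_dvd_val, Nat.sub_sub]

theorem quotMap_eq_zero_iff_nsmul {c : ℕ} {g : G} : quotMap e c g = 0 ↔ p ^ c • (e g).1 = 0 := by
  simpa using pow_nsmul_quotMap_eq_zero_iff e (n := 0)

section Finite

variable [Finite ι]

theorem addOrderOf_fst (g : G) : addOrderOf (e g).1 = p ^ ordExp e g := by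
  obtain ⟨n, hn⟩ := exists_addOrderOf_eq_prime_pow_pi_zmod (e g).1
  rw [ordExp, hn, (Fact.out : p.Prime).factorization_pow, Finsupp.single_eq_same]

theorem addOrderOf_eq_pow_ordExp_mul (hH : ¬ p ∣ AddMonoid.exponent H) (g : G) :
    addOrderOf g = p ^ ordExp e g * addOrderOf (e g).2 := by
  have hcop : p.Coprime (addOrderOf (e g).2) := (Nat.Prime.coprime_iff_not_dvd Fact.out).2
    fun h => hH (h.trans (AddMonoid.addOrder_dvd_exponent _))
  rw [← e.addOrderOf_eq, Prod.addOrderOf, addOrderOf_fst, (hcop.pow_left _).lcm_eq_mul]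

theorem addOrderOf_quotMap (c : ℕ) (g : G) : addOrderOf (quotMap e c g) = p ^ (ordExp e g - c) := by
  obtain ⟨n, hn⟩ := exists_addOrderOf_eq_prime_pow_pi_zmod (quotMap e c g)
  have hiff (m : ℕ) : n ≤ m ↔ ordExp e g - c ≤ m := by
    have hp1 := (Fact.out : p.Prime).one_lt
    rw [← Nat.pow_dvd_pow_iff_le_right hp1, ← hn, addOrderOf_dvd_iff_nsmul_eq_zero,
      pow_nsmul_quotMap_eq_zero_iff, ← addOrderOf_dvd_iff_nsmul_eq_zero, addOrderOf_fst,
      Nat.pow_dvd_pow_iff_le_right hp1, tsub_le_iff_left]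
  rw [hn, eq_of_forall_ge_iff hiff]

theorem quotMap_eq_zero_iff {c : ℕ} {g : G} : quotMap e c g = 0 ↔ ordExp e g ≤ c := by
  rw [quotMap_eq_zero_iff_nsmul, ← addOrderOf_dvd_iff_nsmul_eq_zero, addOrderOf_fst,
    Nat.pow_dvd_pow_iff_le_right (Fact.out : p.Prime).one_lt]

end Finite

variable [Fintype ι]

theorem ordExp_le_sup (g : G) : ordExp e g ≤ univ.sup α := by
  rw [← quotMap_eq_zero_iff, quotMap_eq_zero_iff_nsmul]
  exact pow_sup_nsmul_eq_zero _

variable [DecidableEq ι]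

/-- The sequence of `p ^ (α i - c) - 1` copies of the generator of each cyclic factor. Its image
under `quotMap e c` is zero-sum free of maximal cross number, so it can be adjoined to any zero-sum
free sequence in the kernel of `quotMap e c`. -/
def genSeq (c : ℕ) : Multiset G :=
  ∑ i, Multiset.replicate (p ^ (α i - c) - 1) (gen e i)

theorem isZeroSumFree_map_quotMap_genSeq (c : ℕ) :
    IsZeroSumFree ((genSeq e c).map (quotMap e c)) := by
  have h := isZeroSumFree_sum_replicate_single univ fun i => p ^ (α i - c)
  rw [genSeq, ← Multiset.coe_mapAddMonoidHom, map_sum]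
  simpa [quotMap_gen] using h

end Decomposition

theorem IsDense.card_le_of_subsums_subset {G : Type*} [AddCommGroup G] [Finite G]
    {S T M : Multiset G} (hS : IsDense S) (hTS : T ≤ S) (hMT : subsums M ⊆ subsums T)
    (h : crossNum T ≤ crossNum M) : T.card ≤ M.card := by
  obtain ⟨U, rfl⟩ := Multiset.le_iff_exists_add.1 hTS
  have hzsf : IsZeroSumFree (M + U) :=
    hS.1.of_subsums_subset (subsums_add_subset_subsums_add hMT subset_rfl)
  have hcard := hS.card_le hzsf (by simpa only [crossNum_add, add_le_add_iff_right] using h)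
  simpa only [Multiset.card_add, add_le_add_iff_right] using hcard

section Levels

variable {G H ι : Type*} [AddCommGroup G] [AddCommGroup H] {p : ℕ} {α : ι → ℕ}
  (e : G ≃+ (∀ i, ZMod (p ^ α i)) × H) (S : Multiset G)

/-- The terms of `S` whose `p`-primary component has order exactly `p ^ l` and whose component
in `H` has order `d`. -/
noncomputable def level (l d : ℕ) : Multiset G :=
  S.filter fun g => ordExp e g = l ∧ addOrderOf (e g).2 = d

/-- The terms of `S` whose `p`-primary component has order greater than `p ^ c` and whose component
in `H` has order `d`; these are the terms replaced in the exchange arguments. -/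
noncomputable def upper (c d : ℕ) : Multiset G :=
  S.filter fun g => c < ordExp e g ∧ addOrderOf (e g).2 = d

theorem upper_eq_level_add_upper (c d : ℕ) :
    upper e S c d = level e S (c + 1) d + upper e S (c + 1) d := by
  have hdisj : S.filter (fun g => (ordExp e g = c + 1 ∧ addOrderOf (e g).2 = d) ∧
      c + 1 < ordExp e g ∧ addOrderOf (e g).2 = d) = 0 :=
    Multiset.filter_eq_nil.2 fun g _ => by omega
  rw [upper, level, upper, Multiset.filter_add_filter, hdisj, add_zero]
  exact Multiset.filter_congr fun g _ => by omega

theorem filter_ordExp_le_add_sum_upper (hH : AddMonoid.exponent H ≠ 0) (c : ℕ) :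
    (S.filter fun g => ordExp e g ≤ c) + ∑ d ∈ (AddMonoid.exponent H).divisors, upper e S c d =
      S := by
  classical
  ext g
  have hg : addOrderOf (e g).2 ∈ (AddMonoid.exponent H).divisors :=
    Nat.mem_divisors.2 ⟨AddMonoid.addOrder_dvd_exponent _, hH⟩
  simp only [upper, Multiset.count_add, Multiset.count_sum', Multiset.count_filter, ite_and]
  rcases le_or_gt (ordExp e g) c with h | h
  · simp [h, h.not_gt]
  · simp [h, h.not_ge, sum_ite_eq, hg]

variable {e} {S}

theorem mem_level {l d : ℕ} {g : G} :
    g ∈ level e S l d ↔ g ∈ S ∧ ordExp e g = l ∧ addOrderOf (e g).2 = d := by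
  rw [level, Multiset.mem_filter]

theorem mem_upper {c d : ℕ} {g : G} :
    g ∈ upper e S c d ↔ g ∈ S ∧ c < ordExp e g ∧ addOrderOf (e g).2 = d := by
  rw [upper, Multiset.mem_filter]

theorem exists_mem_subsums_quotMap_eq_zero {T : Multiset G} {c : ℕ}
    (h : ¬ IsZeroSumFree (T.map (quotMap e c))) : ∃ g ∈ subsums T, quotMap e c g = 0 := by
  rwa [isZeroSumFree_iff_zero_notMem_subsums, not_not, subsums_map] at h

variable [Fact p.Prime]

theorem addOrderOf_dvd_of_mem_subsums {T : Multiset G} {c d : ℕ} {g : G}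
    (hT : ∀ x ∈ T, addOrderOf (e x).2 = d)
    (hg : g ∈ subsums T) (hgc : quotMap e c g = 0) : addOrderOf g ∣ p ^ c * d := by
  have hsnd : d • (e g).2 = 0 := by
    let f : G →+ H := (nsmulAddMonoidHom d).comp ((AddMonoidHom.snd _ H).comp e.toAddMonoidHom)
    refine map_eq_zero_of_mem_subsums (f := f) (fun x hx => ?_) hg
    change d • (e x).2 = 0
    rw [← hT x hx]
    exact addOrderOf_nsmul_eq_zero (e x).2
  rw [quotMap_eq_zero_iff_nsmul] at hgc
  rw [← e.addOrderOf_eq, addOrderOf_dvd_iff_nsmul_eq_zero, Prod.ext_iff]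
  exact ⟨by rw [Prod.smul_fst, mul_comm, mul_smul, hgc, smul_zero, Prod.fst_zero],
    by rw [Prod.smul_snd, mul_smul, hsnd, smul_zero, Prod.snd_zero]⟩

theorem inv_mul_inv_le_inv_addOrderOf {T : Multiset G} {c d : ℕ} {g : G}
    (hT : ∀ x ∈ T, addOrderOf (e x).2 = d) (hg : g ∈ subsums T) (hgc : quotMap e c g = 0) :
    ((p : ℝ) ^ c)⁻¹ * (d : ℝ)⁻¹ ≤ (addOrderOf g : ℝ)⁻¹ := by
  have hdvd := addOrderOf_dvd_of_mem_subsums hT hg hgc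
  rw [← mul_inv]
  rcases Nat.eq_zero_or_pos (p ^ c * d) with h0 | hpos
  · have h0' : (p : ℝ) ^ c * d = 0 := by exact_mod_cast h0
    rw [h0', inv_zero]
    positivity
  · have hord : 0 < addOrderOf g := Nat.pos_of_dvd_of_pos hdvd hpos
    exact inv_anti₀ (by exact_mod_cast hord) (by exact_mod_cast Nat.le_of_dvd hpos hdvd)

theorem upper_eq_zero [Fintype ι] {c : ℕ} (hc : univ.sup α ≤ c) (d : ℕ) : upper e S c d = 0 :=
  Multiset.filter_eq_nil.2 fun g _ hg => by
    have := ordExp_le_sup e g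
    omega

variable [Finite ι]

theorem crossNum_level (hH : ¬ p ∣ AddMonoid.exponent H) (l d : ℕ) :
    crossNum (level e S l d) = (level e S l d).card * (((p : ℝ) ^ l)⁻¹ * (d : ℝ)⁻¹) := by
  rw [crossNum_eq_card_mul (n := p ^ l * d), Nat.cast_mul, Nat.cast_pow, mul_inv]
  intro g hg
  obtain ⟨-, rfl, rfl⟩ := mem_level.1 hg
  exact addOrderOf_eq_pow_ordExp_mul e hH g

theorem crossNum_upper (hH : ¬ p ∣ AddMonoid.exponent H) (c d : ℕ) :
    crossNum (upper e S c d) =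
      ((p : ℝ) ^ c)⁻¹ * (d : ℝ)⁻¹ * crossNum ((upper e S c d).map (quotMap e c)) := by
  rw [crossNum_eq_inv_mul_crossNum_map (f := quotMap e c) (n := p ^ c * d), Nat.cast_mul,
    Nat.cast_pow, mul_inv]
  intro g hg
  obtain ⟨-, hc, rfl⟩ := mem_upper.1 hg
  rw [addOrderOf_eq_pow_ordExp_mul e hH, addOrderOf_quotMap, mul_right_comm, ← pow_add,
    Nat.add_sub_cancel' hc.le]

end Levels

section ScaledK

variable {ι : Type*} [Fintype ι] {p : ℕ} {α : ι → ℕ}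

/-- The rank of `p ^ c • G` for the `p`-group `G = ⨁ i, C_{p ^ α i}`. -/
def rankAbove (α : ι → ℕ) (c : ℕ) : ℕ :=
  #{i | c < α i}

/-- The little cross number `∑ i, (1 - p ^ (-β i))` of `⨁ i, C_{p ^ β i}` for `β i = α i - c`
(truncated subtraction), scaled by `p ^ (-c)` to measure cross numbers in `⨁ i, C_{p ^ α i}`. -/
noncomputable def scaledK (p : ℕ) (α : ι → ℕ) (c : ℕ) : ℝ :=
  ((p : ℝ) ^ c)⁻¹ * ∑ i, (1 - ((p : ℝ) ^ (α i - c))⁻¹)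

theorem rankAbove_antitone (α : ι → ℕ) : Antitone (rankAbove α) :=
  fun _ _ hcd => card_le_card (monotone_filter_right univ fun _ _ hi => hcd.trans_lt hi)

theorem inv_pow_eq_mul_inv_pow_succ {x : ℝ} (hx : x ≠ 0) (c : ℕ) :
    (x ^ c)⁻¹ = x * (x ^ (c + 1))⁻¹ := by
  rw [pow_succ', mul_inv, mul_inv_cancel_left₀ hx]

theorem card_sub_ne_zero_eq_rankAbove (c : ℕ) : #{i | α i - c ≠ 0} = rankAbove α c := by
  simp_rw [rankAbove, Nat.sub_ne_zero_iff_lt]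

theorem scaledK_eq_sum_ite (c : ℕ) :
    scaledK p α c = ∑ i, if c < α i then ((p : ℝ) ^ c)⁻¹ - ((p : ℝ) ^ α i)⁻¹ else 0 := by
  rw [scaledK, mul_sum]
  refine sum_congr rfl fun i _ => ?_
  split_ifs with h
  · rw [mul_sub, mul_one, ← mul_inv, ← pow_add, Nat.add_sub_cancel' h.le]
  · rw [Nat.sub_eq_zero_of_le (not_lt.1 h), pow_zero, inv_one, sub_self, mul_zero]

theorem scaledK_succ (c : ℕ) :
    scaledK p α c =
      scaledK p α (c + 1) + rankAbove α c * (((p : ℝ) ^ c)⁻¹ - ((p : ℝ) ^ (c + 1))⁻¹) := by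
  rw [scaledK_eq_sum_ite, scaledK_eq_sum_ite, rankAbove, ← nsmul_eq_mul, ← sum_const,
    sum_filter, ← sum_add_distrib]
  refine sum_congr rfl fun i _ => ?_
  rcases lt_trichotomy (c + 1) (α i) with h | h | h
  · rw [if_pos (by omega), if_pos h, if_pos (by omega)]
    ring
  · rw [if_pos (by omega), if_neg (by omega), if_pos (by omega), h, zero_add]
  · rw [if_neg (by omega), if_neg (by omega), if_neg (by omega), zero_add]

theorem scaledK_nonneg (c : ℕ) : 0 ≤ scaledK p α c :=
  mul_nonneg (by positivity) (sum_nonneg fun i _ => sub_nonneg.2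
    (by exact_mod_cast Nat.cast_inv_le_one (α := ℝ) (p ^ (α i - c))))

theorem scaledK_le (c : ℕ) : scaledK p α c ≤ rankAbove α c * ((p : ℝ) ^ c)⁻¹ := by
  rw [scaledK_eq_sum_ite, rankAbove, ← nsmul_eq_mul, ← sum_const, sum_filter]
  refine sum_le_sum fun i _ => ?_
  split_ifs
  · exact sub_le_self _ (by positivity)
  · exact le_rfl

end ScaledK

section Exchange

variable {G H ι : Type*} [AddCommGroup G] [AddCommGroup H] [Fintype ι] {p : ℕ} [Fact p.Prime]
  {α : ι → ℕ} {e : G ≃+ (∀ i, ZMod (p ^ α i)) × H} {S : Multiset G} {c : ℕ}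

theorem crossNum_genSeq [DecidableEq ι] (c : ℕ) : crossNum (genSeq e c) = scaledK p α c := by
  have hp : p ≠ 0 := (Fact.out : p.Prime).ne_zero
  have hp' : (p : ℝ) ≠ 0 := Nat.cast_ne_zero.2 hp
  rw [genSeq, crossNum_sum, scaledK, mul_sum]
  refine sum_congr rfl fun i _ => ?_
  rw [crossNum_eq_card_mul (n := p ^ α i) fun g hg => by
      rw [Multiset.eq_of_mem_replicate hg, addOrderOf_gen], Multiset.card_replicate,
    Nat.cast_pred (Nat.pow_pos (Nat.pos_of_ne_zero hp)), Nat.cast_pow, Nat.cast_pow]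
  rcases le_total c (α i) with h | h
  · obtain ⟨m, hm⟩ := Nat.exists_eq_add_of_le h
    rw [hm, Nat.add_sub_cancel_left, pow_add, mul_inv, mul_left_comm, sub_mul,
      mul_inv_cancel₀ (pow_ne_zero m hp'), one_mul]
  · rw [Nat.sub_eq_zero_of_le h, pow_zero, inv_one, sub_self, zero_mul, mul_zero]

theorem crossNum_upper_le_of_isZeroSumFree_map (hH : ¬ p ∣ AddMonoid.exponent H) {d : ℕ}
    (h : IsZeroSumFree ((upper e S c d).map (quotMap e c))) :
    crossNum (upper e S c d) ≤ scaledK p α c * (d : ℝ)⁻¹ := by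
  rw [crossNum_upper hH, scaledK, mul_right_comm]
  gcongr
  simpa only [Nat.cast_pow] using h.crossNum_le

theorem exists_le_level_quotMap_sum_eq_zero (hc : rankAbove α c ≤ 2) {d : ℕ}
    (hcard : (rankAbove α c + 1) * (p - 1) < (level e S (c + 1) d).card) :
    ∃ T ≤ level e S (c + 1) d, T ≠ 0 ∧ T.card ≤ p ∧ quotMap e c T.sum = 0 := by
  have htors : ∀ x ∈ (level e S (c + 1) d).map (quotMap e c), p • x = 0 := by
    intro x hx
    obtain ⟨g, hg, rfl⟩ := Multiset.mem_map.1 hx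
    have hord := addOrderOf_quotMap e c g
    rw [(mem_level.1 hg).2.1, Nat.add_sub_cancel_left, pow_one] at hord
    exact addOrderOf_dvd_iff_nsmul_eq_zero.1 hord.dvd
  rw [← card_sub_ne_zero_eq_rankAbove] at hc hcard
  obtain ⟨_, hT, hT0, hTp, hsum⟩ := exists_card_le_sum_eq_zero_of_torsion hc htors
    (by rwa [Multiset.card_map])
  obtain ⟨T, hTL, rfl⟩ := exists_le_map_eq_of_le_map hT
  exact ⟨T, hTL, by simpa using hT0, by simpa using hTp, by rwa [map_multiset_sum]⟩

variable [Finite G]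

/-- A short zero-sum modulo the kernel of `quotMap e c` inside a level would be replaced by its
single sum without decreasing the cross number, against the minimal length of `S`. -/
theorem IsDense.card_level_le (hS : IsDense S) (hH : ¬ p ∣ AddMonoid.exponent H)
    (hc : rankAbove α c ≤ 2) (d : ℕ) :
    (level e S (c + 1) d).card ≤ (rankAbove α c + 1) * (p - 1) := by
  by_contra! hcard
  obtain ⟨T, hTL, hT0, hTp, hsum⟩ := exists_le_level_quotMap_sum_eq_zero hc hcard
  have hmem (x : G) (hx : x ∈ T) := mem_level.1 (Multiset.mem_of_le hTL hx)
  have hTsum : T.sum ∈ subsums T := ⟨T, le_rfl, hT0, rfl⟩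
  have hcross : crossNum T ≤ crossNum {T.sum} := by
    have hp0 : (p : ℝ) ≠ 0 := Nat.cast_ne_zero.2 (Fact.out : p.Prime).ne_zero
    rw [crossNum_singleton, crossNum_eq_card_mul (n := p ^ (c + 1) * d) fun g hg => by
      rw [addOrderOf_eq_pow_ordExp_mul e hH, (hmem g hg).2.1, (hmem g hg).2.2]]
    calc (T.card : ℝ) * ((p ^ (c + 1) * d : ℕ) : ℝ)⁻¹
        ≤ p * ((p ^ (c + 1) * d : ℕ) : ℝ)⁻¹ := by gcongr
      _ = ((p : ℝ) ^ c)⁻¹ * (d : ℝ)⁻¹ := by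
          rw [inv_pow_eq_mul_inv_pow_succ hp0, mul_assoc, ← mul_inv]
          push_cast
          rfl
      _ ≤ _ := inv_mul_inv_le_inv_addOrderOf (fun x hx => (hmem x hx).2.2) hTsum hsum
  have hT1 := hS.card_le_of_subsums_subset (hTL.trans (Multiset.filter_le _ _))
    (by simpa only [subsums_singleton, Set.singleton_subset_iff] using hTsum) hcross
  obtain ⟨g, rfl⟩ := Multiset.card_eq_one.1 (hT1.antisymm (Multiset.card_pos.2 hT0))
  rw [Multiset.sum_singleton, quotMap_eq_zero_iff] at hsum
  have := (hmem g (Multiset.mem_singleton_self g)).2.1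
  omega

theorem IsDense.crossNum_upper_le_add_crossNum_upper_succ (hS : IsDense S)
    (hH : ¬ p ∣ AddMonoid.exponent H) (hc : rankAbove α c ≤ 2) (d : ℕ) :
    crossNum (upper e S c d) ≤
      (rankAbove α c + 1) * (((p : ℝ) ^ c)⁻¹ - ((p : ℝ) ^ (c + 1))⁻¹) * (d : ℝ)⁻¹ +
        crossNum (upper e S (c + 1) d) := by
  have hp : p.Prime := Fact.out
  have hp0 : (p : ℝ) ≠ 0 := Nat.cast_ne_zero.2 hp.ne_zero
  have hcard : ((level e S (c + 1) d).card : ℝ) ≤ (rankAbove α c + 1) * (p - 1) := by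
    rw [← Nat.cast_pred hp.pos]
    exact_mod_cast hS.card_level_le hH hc d
  rw [upper_eq_level_add_upper, crossNum_add, crossNum_level hH]
  refine add_le_add ((mul_le_mul_of_nonneg_right hcard (by positivity)).trans_eq ?_) le_rfl
  rw [inv_pow_eq_mul_inv_pow_succ hp0 c]
  ring

theorem IsDense.crossNum_upper_le (hS : IsDense S) (hH : ¬ p ∣ AddMonoid.exponent H)
    (hc : rankAbove α c ≤ 2) (d : ℕ) :
    crossNum (upper e S c d) ≤ (scaledK p α c + ((p : ℝ) ^ c)⁻¹) * (d : ℝ)⁻¹ := by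
  obtain ⟨n, hn⟩ : ∃ n, univ.sup α ≤ c + n := ⟨_, Nat.le_add_left _ c⟩
  induction n generalizing c with
  | zero =>
    rw [add_zero] at hn
    rw [upper_eq_zero hn, crossNum_zero]
    have := scaledK_nonneg (p := p) (α := α) c
    positivity
  | succ n ih =>
    have hstep := hS.crossNum_upper_le_add_crossNum_upper_succ (e := e) hH hc d
    have hsucc := ih ((rankAbove_antitone α (Nat.le_add_right c 1)).trans hc) (by omega)
    rw [scaledK_succ]
    linarith

theorem IsDense.exists_replacement (hS : IsDense S) (hH : ¬ p ∣ AddMonoid.exponent H)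
    (hc : rankAbove α c ≤ 2) (d : ℕ) :
    ∃ M : Multiset G, subsums M ⊆ subsums (upper e S c d) ∧ (∀ x ∈ M, quotMap e c x = 0) ∧
      crossNum (upper e S c d) ≤ crossNum M + scaledK p α c * (d : ℝ)⁻¹ := by
  by_cases h : IsZeroSumFree ((upper e S c d).map (quotMap e c))
  · exact ⟨0, by simp, by simp, by simpa using crossNum_upper_le_of_isZeroSumFree_map hH h⟩
  · obtain ⟨g, hg, hgc⟩ := exists_mem_subsums_quotMap_eq_zero h
    refine ⟨{g}, by simpa using hg, by simpa using hgc, ?_⟩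
    have hle := hS.crossNum_upper_le (e := e) hH hc d
    have hinv := inv_mul_inv_le_inv_addOrderOf (fun x hx => (mem_upper.1 hx).2.2) hg hgc
    rw [crossNum_singleton]
    linarith

/-- Replace all terms with `p`-part of order greater than `p ^ c` by the sequences `M d` in the
kernel of `quotMap e c`, and adjoin `genSeq e c`; the result is again zero-sum free. -/
theorem IsDense.scaledK_add_sum_crossNum_le (hS : IsDense S) (hH : AddMonoid.exponent H ≠ 0)
    {M : ℕ → Multiset G}
    (hMS : ∀ d ∈ (AddMonoid.exponent H).divisors, subsums (M d) ⊆ subsums (upper e S c d))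
    (hMc : ∀ d ∈ (AddMonoid.exponent H).divisors, ∀ x ∈ M d, quotMap e c x = 0) :
    scaledK p α c + ∑ d ∈ (AddMonoid.exponent H).divisors, crossNum (M d) ≤
      ∑ d ∈ (AddMonoid.exponent H).divisors, crossNum (upper e S c d) := by
  classical
  let L := S.filter fun g => ordExp e g ≤ c
  have hLS := filter_ordExp_le_add_sum_upper e S hH c
  have hzsf : IsZeroSumFree (L + ∑ d ∈ (AddMonoid.exponent H).divisors, M d) := by
    refine hS.1.of_subsums_subset ?_
    rw [← hLS]
    exact subsums_add_subset_subsums_add subset_rfl (subsums_sum_subset_subsums_sum hMS)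
  have hker : ∀ x ∈ L + ∑ d ∈ (AddMonoid.exponent H).divisors, M d, quotMap e c x = 0 := by
    intro x hx
    rcases Multiset.mem_add.1 hx with hx | hx
    · exact (quotMap_eq_zero_iff e).2 (Multiset.mem_filter.1 hx).2
    · obtain ⟨d, hd, hxd⟩ := Multiset.mem_sum.1 hx
      exact hMc d hd x hxd
  have hle := hS.crossNum_le (hzsf.add_of_map hker (isZeroSumFree_map_quotMap_genSeq e c))
  have hScross := congrArg crossNum hLS
  simp only [crossNum_add, crossNum_sum, crossNum_genSeq] at hle hScross
  linarith

theorem TwoSmall.sum_erase_one_lt {p n : ℕ} (h : TwoSmall p n) :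
    ∑ d ∈ n.divisors.erase 1, (d : ℝ)⁻¹ < (2 * p + 1 : ℝ)⁻¹ := by
  have hn : n ≠ 0 := fun hn => h.1 (hn ▸ dvd_zero p)
  have hsum : ∑ d ∈ n.divisors, (d : ℝ)⁻¹ < (2 * p + 2 : ℝ) / (2 * p + 1) := by
    simp_rw [← one_div]
    have h2 := h.2
    rify at h2
    exact h2
  rw [← add_sum_erase _ _ (Nat.one_mem_divisors.2 hn), Nat.cast_one, inv_one] at hsum
  have hsplit : (2 * p + 2 : ℝ) / (2 * p + 1) = 1 + (2 * p + 1 : ℝ)⁻¹ := by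
    field_simp
    ring
  linarith

theorem TwoSmall.scaledK_mul_sum_erase_one_lt {n : ℕ} (h : TwoSmall p n)
    (hc : rankAbove α c ≤ 2) :
    scaledK p α c * ∑ d ∈ n.divisors.erase 1, (d : ℝ)⁻¹ < ((p : ℝ) ^ (c + 1))⁻¹ := by
  have hp := (Fact.out : p.Prime).pos
  have hp' : (0 : ℝ) < p := Nat.cast_pos.2 hp
  have hK : scaledK p α c ≤ 2 * ((p : ℝ) ^ c)⁻¹ :=
    (scaledK_le c).trans (by gcongr; exact_mod_cast hc)
  calc scaledK p α c * ∑ d ∈ n.divisors.erase 1, (d : ℝ)⁻¹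
      ≤ 2 * ((p : ℝ) ^ c)⁻¹ * (2 * p + 1 : ℝ)⁻¹ :=
        mul_le_mul hK h.sum_erase_one_lt.le (by positivity) (by positivity)
    _ = ((p : ℝ) ^ c)⁻¹ * (2 / (2 * p + 1)) := by ring
    _ < ((p : ℝ) ^ c)⁻¹ * (p : ℝ)⁻¹ := by
        gcongr
        rw [inv_eq_one_div, div_lt_div_iff₀ (by positivity) hp']
        linarith
    _ = ((p : ℝ) ^ (c + 1))⁻¹ := by rw [pow_succ, mul_inv]

theorem IsDense.scaledK_add_crossNum_lt (hS : IsDense S)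
    (hsmall : TwoSmall p (AddMonoid.exponent H)) (hc : rankAbove α c ≤ 2) {M : Multiset G}
    (hMS : subsums M ⊆ subsums (upper e S c 1)) (hMc : ∀ x ∈ M, quotMap e c x = 0) :
    scaledK p α c + crossNum M < crossNum (upper e S c 1) + ((p : ℝ) ^ (c + 1))⁻¹ := by
  have hH0 : AddMonoid.exponent H ≠ 0 := fun h => hsmall.1 (h ▸ dvd_zero p)
  have hone := Nat.one_mem_divisors.2 hH0
  choose N hNS hNc hNcross using hS.exists_replacement (e := e) hsmall.1 hc
  have hle := hS.scaledK_add_sum_crossNum_le hH0 (e := e) (c := c) (M := Function.update N 1 M)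
    (fun d _ => by rcases eq_or_ne d 1 with rfl | hd <;> simp [*])
    (fun d _ => by
      rcases eq_or_ne d 1 with rfl | hd
      · simpa using hMc
      · simpa [hd] using hNc d)
  have hothers : ∑ d ∈ (AddMonoid.exponent H).divisors.erase 1, crossNum (upper e S c d) ≤
      ∑ d ∈ (AddMonoid.exponent H).divisors.erase 1, crossNum (Function.update N 1 M d) +
        scaledK p α c * ∑ d ∈ (AddMonoid.exponent H).divisors.erase 1, (d : ℝ)⁻¹ := by
    rw [mul_sum, ← sum_add_distrib]
    refine sum_le_sum fun d hd => ?_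
    rw [Function.update_of_ne (ne_of_mem_erase hd)]
    exact hNcross d
  rw [← add_sum_erase _ _ hone, ← add_sum_erase _ _ hone, Function.update_self] at hle
  have hlt := hsmall.scaledK_mul_sum_erase_one_lt (α := α) hc
  linarith

theorem IsDense.crossNum_upper_one_le (hS : IsDense S)
    (hsmall : TwoSmall p (AddMonoid.exponent H)) (hc : rankAbove α c ≤ 2) :
    crossNum (upper e S c 1) ≤ scaledK p α c := by
  obtain ⟨n, hn⟩ : ∃ n, univ.sup α ≤ c + n := ⟨_, Nat.le_add_left _ c⟩
  induction n generalizing c with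
  | zero =>
    rw [add_zero] at hn
    rw [upper_eq_zero hn, crossNum_zero]
    exact scaledK_nonneg c
  | succ n ih =>
    by_cases h : IsZeroSumFree ((upper e S c 1).map (quotMap e c))
    · simpa using crossNum_upper_le_of_isZeroSumFree_map hsmall.1 h
    obtain ⟨g, hg, hgc⟩ := exists_mem_subsums_quotMap_eq_zero h
    have hlt := hS.scaledK_add_crossNum_lt hsmall hc (M := {g}) (by simpa using hg)
      (by simpa using hgc)
    have hinv := inv_mul_inv_le_inv_addOrderOf (fun x hx => (mem_upper.1 hx).2.2) hg hgc
    have hstep := hS.crossNum_upper_le_add_crossNum_upper_succ (e := e) hsmall.1 hc 1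
    have hsucc := ih ((rankAbove_antitone α (Nat.le_add_right c 1)).trans hc) (by omega)
    have hK := scaledK_succ (p := p) (α := α) c
    rw [crossNum_singleton] at hlt
    rw [Nat.cast_one, inv_one, mul_one] at hinv hstep
    linarith

end Exchange

section Invariants

variable {p k : ℕ} {a : ℕ → ℕ}

theorem rankAbove_eq_two (hanti : ∀ i j : ℕ, 1 ≤ i → i ≤ j → a j ≤ a i)
    (hzero : ∀ j : ℕ, k < j → a j = 0) {c : ℕ} (h3 : a 3 ≤ c) (h2 : c < a 2) :
    rankAbove (fun j : Fin k => a (j.1 + 1)) c = 2 := by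
  have hk : 2 ≤ k := by
    by_contra! hk
    have := hzero 2 hk
    omega
  refine card_eq_two.2 ⟨⟨0, by omega⟩, ⟨1, by omega⟩, by simp, ?_⟩
  ext j
  simp only [mem_filter_univ, mem_insert, mem_singleton, Fin.ext_iff]
  constructor
  · intro hj
    by_contra! hj'
    have := hanti 3 (j + 1) (by omega) (by omega)
    omega
  · rintro (hj | hj) <;> rw [hj]
    · exact h2.trans_le (hanti 1 2 le_rfl (by omega))
    · exact h2

theorem exponent_pi_zmod_prime_pow {ι : Type*} [Finite ι] (p : ℕ) {α : ι → ℕ} {i : ι}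
    (hi : ∀ j, α j ≤ α i) : AddMonoid.exponent (∀ j, ZMod (p ^ α j)) = p ^ α i := by
  have := Fintype.ofFinite ι
  simp_rw [AddMonoid.exponent_pi, ZMod.exponent]
  exact Nat.dvd_antisymm (Finset.lcm_dvd fun j _ => pow_dvd_pow p (hi j))
    (Finset.dvd_lcm (mem_univ i))

theorem exponent_div_pow_eq {G H ι : Type*} [AddCommGroup G] [AddCommGroup H] [Finite ι]
    (hp : p.Prime) {α : ι → ℕ} (e : G ≃+ (∀ i, ZMod (p ^ α i)) × H)
    (hH : ¬ p ∣ AddMonoid.exponent H) {i : ι} (hi : ∀ j, α j ≤ α i) :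
    AddMonoid.exponent G / p ^ α i = AddMonoid.exponent H := by
  have hcop : (p ^ α i).Coprime (AddMonoid.exponent H) :=
    ((Nat.Prime.coprime_iff_not_dvd hp).2 hH).pow_left _
  rw [AddMonoid.exponent_eq_of_addEquiv e, AddMonoid.exponent_prod,
    exponent_pi_zmod_prime_pow p hi, lcm_eq_nat_lcm, hcop.lcm_eq_mul,
    Nat.mul_div_cancel_left _ (Nat.pow_pos hp.pos)]

end Invariants

theorem two_replacement_lemma_general {G H ι : Type*} [AddCommGroup G] [Finite G] [AddCommGroup H]
    [Fintype ι] {p : ℕ} [Fact p.Prime] {α : ι → ℕ} (e : G ≃+ (∀ i, ZMod (p ^ α i)) × H)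
    {S : Multiset G} {c : ℕ}
    (hsmall : TwoSmall p (AddMonoid.exponent H)) (hc : rankAbove α c ≤ 2) (hS : IsDense S) :
    rankAbove α c * (p - 1) ≤ (S.filter fun g => addOrderOf g = p ^ (c + 1)).card := by
  have hp : p.Prime := Fact.out
  have hp0 : (0 : ℝ) < p := Nat.cast_pos.2 hp.pos
  have hlevel : level e S (c + 1) 1 ≤ S.filter fun g => addOrderOf g = p ^ (c + 1) := by
    refine Multiset.monotone_filter_right S fun g hg => ?_
    rw [addOrderOf_eq_pow_ordExp_mul e hsmall.1, hg.1, hg.2, mul_one]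
  refine le_trans ?_ (Multiset.card_le_card hlevel)
  have hlt := hS.scaledK_add_crossNum_lt (e := e) hsmall hc (M := 0) (by simp) (by simp)
  have hsucc := hS.crossNum_upper_one_le (e := e) hsmall
    ((rankAbove_antitone α (Nat.le_add_right c 1)).trans hc)
  rw [upper_eq_level_add_upper, crossNum_add, crossNum_level hsmall.1,
    scaledK_succ, crossNum_zero, Nat.cast_one, inv_one, mul_one] at hlt
  have hmul : (rankAbove α c * (p - 1) : ℝ) * ((p : ℝ) ^ (c + 1))⁻¹ <
      ((level e S (c + 1) 1).card + 1) * ((p : ℝ) ^ (c + 1))⁻¹ := by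
    rw [inv_pow_eq_mul_inv_pow_succ hp0.ne'] at hlt
    linarith
  have hcard := lt_of_mul_lt_mul_right hmul (by positivity)
  rw [← Nat.cast_pred hp.pos] at hcard
  exact Nat.lt_succ_iff.1 (by exact_mod_cast hcard)

/-- (2-Replacement lemma) Let `p` be a prime dividing `|G|`, and write the `p`-Sylow
subgroup of `G` as `C_{p^{a_1}} ⊕ ⋯ ⊕ C_{p^{a_k}}` with `a_1 ≥ ⋯ ≥ a_k ≥ 1` (and
`a_j = 0` for `j > k`), i.e. `G ≅ (⨁_{j=1}^k C_{p^{a_j}}) ⊕ G'` with `p ∤ |G'|`.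
Suppose `a_2 > a_3`, let `a_3 + 1 ≤ a ≤ a_2`, and suppose `p` is 2-small with respect
to `exp(G)/p^{a_1}`. Then a dense zero-sum free sequence `S` over `G` contains at
least `2p - 2` elements of order `p^a`. -/
theorem two_replacement_lemma
    (G : Type*) [AddCommGroup G] [Finite G] (p : ℕ) (hp : p.Prime)
    (hpG : p ∣ Nat.card G)
    (k : ℕ) (a : ℕ → ℕ)
    (hanti : ∀ i j : ℕ, 1 ≤ i → i ≤ j → a j ≤ a i)
    (hpos : ∀ j : ℕ, 1 ≤ j → j ≤ k → 1 ≤ a j)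
    (hzero : ∀ j : ℕ, k < j → a j = 0)
    (G' : Type*) [AddCommGroup G'] [Finite G'] (hG' : ¬ p ∣ Nat.card G')
    (e : G ≃+ (∀ j : Fin k, ZMod (p ^ a (j.1 + 1))) × G')
    (hgap : a 3 < a 2)
    (b : ℕ) (hb1 : a 3 + 1 ≤ b) (hb2 : b ≤ a 2)
    (h2 : TwoSmall p (AddMonoid.exponent G / p ^ a 1))
    (S : Multiset G) (hS : IsDense S) :
    2 * p - 2 ≤ Multiset.card (S.filter fun g => addOrderOf g = p ^ b) := by
  have := Fact.mk hp
  have hk : 0 < k := by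
    by_contra! hk
    have := hzero 2 (by omega)
    omega
  have hH : ¬ p ∣ AddMonoid.exponent G' := fun h => hG' (h.trans AddGroup.exponent_dvd_nat_card)
  have hexp : AddMonoid.exponent G / p ^ a 1 = AddMonoid.exponent G' :=
    exponent_div_pow_eq hp e hH (i := ⟨0, hk⟩) fun j => hanti 1 (j + 1) le_rfl (by omega)
  have hrank := rankAbove_eq_two hanti hzero (c := b - 1) (by omega) (by omega)
  have hcard := two_replacement_lemma_general e (hexp ▸ h2) hrank.le hS
  rwa [hrank, Nat.mul_sub, mul_one, Nat.sub_add_cancel (by omega)] at hcard
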